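/- arXiv:math/0610171 — 4 statements merged into one kernel-verified Lean document; each statement's English description precedes it below -/
import Mathlib

section
/- Let A be a Banach algebra, I a closed two-sided ideal of A, and n ∈ ℕ. If A is (n+2)-I-weakly amenable, then A is n-I-weakly amenable. -/
/- ## Core definitions: Banach bimodules over (non-unital) complex Banach algebras,
iterated dual modules, derivations, ideal amenability, and Arens extensions. -/

noncomputable section

open ContinuousLinearMap

universe u

/-- The topological dual of a complex normed space. -/
abbrev Dl (X : Type u) [SeminormedAddCommGroup X] [NormedSpace ℂ X] : Type u := X →L[ℂ] ℂ

/-- The canonical embedding of a normed space into its double dual. -/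
def inclDD (X : Type u) [SeminormedAddCommGroup X] [NormedSpace ℂ X] : X →L[ℂ] Dl (Dl X) :=
  ContinuousLinearMap.apply ℂ ℂ

@[simp] lemma inclDD_apply {X : Type u} [SeminormedAddCommGroup X] [NormedSpace ℂ X]
    (x : X) (f : Dl X) : inclDD X x f = f x := rfl

/-- A (bounded) Banach bimodule structure of a complex Banach algebra `A`
on a complex Banach space `X`:  `l a x = a • x` and `r a x = x • a`. -/
structure Bimodule (A : Type u) [NonUnitalNormedRing A] [NormedSpace ℂ A]
    [SMulCommClass ℂ A A] [IsScalarTower ℂ A A]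
    (X : Type u) [NormedAddCommGroup X] [NormedSpace ℂ X] : Type u where
  l : A →L[ℂ] X →L[ℂ] X
  r : A →L[ℂ] X →L[ℂ] X
  l_mul : ∀ a b x, l (a * b) x = l a (l b x)
  r_mul : ∀ a b x, r (a * b) x = r b (r a x)
  lr : ∀ a b x, l a (r b x) = r b (l a x)

variable {A : Type u} [NonUnitalNormedRing A] [NormedSpace ℂ A]
  [SMulCommClass ℂ A A] [IsScalarTower ℂ A A]

/-- The dual module of a Banach bimodule: `(a·f)(x) = f(x·a)` and `(f·a)(x) = f(a·x)`. -/
def Bimodule.dualMod {X : Type u} [NormedAddCommGroup X] [NormedSpace ℂ X]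
    (M : Bimodule A X) : Bimodule A (Dl X) where
  l := ((ContinuousLinearMap.compL ℂ X X ℂ).flip).comp M.r
  r := ((ContinuousLinearMap.compL ℂ X X ℂ).flip).comp M.l
  l_mul := fun a b f => by
    ext x
    simp [M.r_mul]
  r_mul := fun a b f => by
    ext x
    simp [M.l_mul]
  lr := fun a b f => by
    ext x
    simp [M.lr]

@[simp] lemma Bimodule.dualMod_l_apply {X : Type u} [NormedAddCommGroup X] [NormedSpace ℂ X]
    (M : Bimodule A X) (a : A) (f : Dl X) (x : X) :
    M.dualMod.l a f x = f (M.r a x) := by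
  simp [Bimodule.dualMod]

@[simp] lemma Bimodule.dualMod_r_apply {X : Type u} [NormedAddCommGroup X] [NormedSpace ℂ X]
    (M : Bimodule A X) (a : A) (f : Dl X) (x : X) :
    M.dualMod.r a f x = f (M.l a x) := by
  simp [Bimodule.dualMod]

/-- A Banach `A`-bimodule, bundled with its underlying space. -/
structure BMod (A : Type u) [NonUnitalNormedRing A] [NormedSpace ℂ A]
    [SMulCommClass ℂ A A] [IsScalarTower ℂ A A] : Type (u + 1) where
  X : Type u
  [xGroup : NormedAddCommGroup X]
  [xSpace : NormedSpace ℂ X]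
  act : Bimodule A X

attribute [instance] BMod.xGroup BMod.xSpace

/-- The dual of a bundled Banach bimodule. -/
def BMod.dualObj (M : BMod A) : BMod A :=
  ⟨Dl M.X, M.act.dualMod⟩

/-- The `n`-th dual of a bundled Banach bimodule (`iter 0 = M`). -/
def BMod.iter (M : BMod A) : ℕ → BMod A
  | 0 => M
  | n + 1 => (M.iter n).dualObj

/-- A bounded derivation from `A` into the Banach `A`-bimodule `M`. -/
def IsDerivation (M : BMod A) (D : A →L[ℂ] M.X) : Prop :=
  ∀ a b : A, D (a * b) = M.act.l a (D b) + M.act.r b (D a)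

/-- An inner derivation.  -/
def IsInner (M : BMod A) (D : A →L[ℂ] M.X) : Prop :=
  ∃ x : M.X, ∀ a : A, D a = M.act.l a x - M.act.r a x

/-- `H¹(A, M) = {0}` : every bounded derivation into `M` is inner. -/
def H1Zero (M : BMod A) : Prop :=
  ∀ D : A →L[ℂ] M.X, IsDerivation M D → IsInner M D

/-- A closed two-sided ideal of the Banach algebra `A`. -/
structure ClosedIdeal (A : Type u) [NonUnitalNormedRing A] [NormedSpace ℂ A]
    [SMulCommClass ℂ A A] [IsScalarTower ℂ A A] : Type u where
  car : Submodule ℂ A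
  isClosed : IsClosed (car : Set A)
  mul_mem_left : ∀ (a x : A), x ∈ car → a * x ∈ car
  mul_mem_right : ∀ (a x : A), x ∈ car → x * a ∈ car

namespace ClosedIdeal

variable (I : ClosedIdeal A)

/-- Left multiplication action of `A` on a closed two-sided ideal. -/
def lAct : A →L[ℂ] ↥I.car →L[ℂ] ↥I.car :=
  LinearMap.mkContinuous₂
    (LinearMap.mk₂ ℂ
      (fun a x => (⟨a * (x : A), I.mul_mem_left a x x.2⟩ : ↥I.car))
      (fun a b x => Subtype.ext <| by simp [add_mul])
      (fun c a x => Subtype.ext <| by simp [smul_mul_assoc])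
      (fun a x y => Subtype.ext <| by simp [mul_add])
      (fun c a x => Subtype.ext <| by simp [mul_smul_comm]))
    1
    (fun a x => by
      simp only [LinearMap.mk₂_apply, one_mul]
      calc ‖(⟨a * (x : A), I.mul_mem_left a x x.2⟩ : ↥I.car)‖ = ‖a * (x : A)‖ := rfl
        _ ≤ ‖a‖ * ‖(x : A)‖ := norm_mul_le _ _
        _ = ‖a‖ * ‖x‖ := by rw [Submodule.coe_norm])

/-- Right multiplication action of `A` on a closed two-sided ideal. -/
def rAct : A →L[ℂ] ↥I.car →L[ℂ] ↥I.car :=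
  LinearMap.mkContinuous₂
    (LinearMap.mk₂ ℂ
      (fun a x => (⟨(x : A) * a, I.mul_mem_right a x x.2⟩ : ↥I.car))
      (fun a b x => Subtype.ext <| by simp [mul_add])
      (fun c a x => Subtype.ext <| by simp [mul_smul_comm])
      (fun a x y => Subtype.ext <| by simp [add_mul])
      (fun c a x => Subtype.ext <| by simp [smul_mul_assoc]))
    1
    (fun a x => by
      simp only [LinearMap.mk₂_apply, one_mul]
      calc ‖(⟨(x : A) * a, I.mul_mem_right a x x.2⟩ : ↥I.car)‖ = ‖(x : A) * a‖ := rfl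
        _ ≤ ‖(x : A)‖ * ‖a‖ := norm_mul_le _ _
        _ = ‖x‖ * ‖a‖ := by rw [Submodule.coe_norm]
        _ = ‖a‖ * ‖x‖ := mul_comm _ _)

@[simp] lemma lAct_apply (a : A) (x : ↥I.car) : (I.lAct a x : A) = a * (x : A) := rfl
@[simp] lemma rAct_apply (a : A) (x : ↥I.car) : (I.rAct a x : A) = (x : A) * a := rfl

/-- A closed two-sided ideal as a Banach `A`-bimodule. -/
def toBMod : BMod A where
  X := ↥I.car
  act :=
    { l := I.lAct
      r := I.rAct
      l_mul := fun a b x => Subtype.ext <| by simp [mul_assoc]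
      r_mul := fun a b x => Subtype.ext <| by simp [mul_assoc]
      lr := fun a b x => Subtype.ext <| by simp [mul_assoc] }

end ClosedIdeal

/-- The Banach algebra `A` as a Banach bimodule over itself. -/
def regBMod (A : Type u) [NonUnitalNormedRing A] [NormedSpace ℂ A]
    [SMulCommClass ℂ A A] [IsScalarTower ℂ A A] : BMod A where
  X := A
  act :=
    { l := ContinuousLinearMap.mul ℂ A
      r := (ContinuousLinearMap.mul ℂ A).flip
      l_mul := fun a b x => by simp [mul_assoc]
      r_mul := fun a b x => by simp [mul_assoc]
      lr := fun a b x => by simp [mul_assoc] }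

/-- `A` is `n`-`I`-weakly amenable: `H¹(A, I⁽ⁿ⁾) = {0}`. -/
def NIWeaklyAmenable (I : ClosedIdeal A) (n : ℕ) : Prop :=
  H1Zero (I.toBMod.iter n)

/-- `A` is `n`-ideally amenable. -/
def NIdeallyAmenable (A : Type u) [NonUnitalNormedRing A] [NormedSpace ℂ A]
    [SMulCommClass ℂ A A] [IsScalarTower ℂ A A] (n : ℕ) : Prop :=
  ∀ I : ClosedIdeal A, H1Zero (I.toBMod.iter n)

/-- `A` is `n`-weakly amenable: `H¹(A, A⁽ⁿ⁾) = {0}`. -/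
def NWeaklyAmenable (A : Type u) [NonUnitalNormedRing A] [NormedSpace ℂ A]
    [SMulCommClass ℂ A A] [IsScalarTower ℂ A A] (n : ℕ) : Prop :=
  H1Zero ((regBMod A).iter n)

/- ## Arens-type extensions of bounded bilinear maps to biduals -/

section Arens

variable {E F G : Type*}
  [SeminormedAddCommGroup E] [NormedSpace ℂ E]
  [SeminormedAddCommGroup F] [NormedSpace ℂ F]
  [SeminormedAddCommGroup G] [NormedSpace ℂ G]

/-- Auxiliary map for the Arens extension:
`arT b Ψ g = (e ↦ Ψ (g ∘ b e))`. -/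
def arT (b : E →L[ℂ] F →L[ℂ] G) (Ψ : Dl (Dl F)) (g : Dl G) : Dl E :=
  LinearMap.mkContinuous
    { toFun := fun e => Ψ (g.comp (b e))
      map_add' := fun e e' => by simp only [map_add, ContinuousLinearMap.comp_add, map_add]
      map_smul' := fun c e => by
        simp only [map_smul, ContinuousLinearMap.comp_smul, map_smul, RingHom.id_apply] }
    (‖Ψ‖ * ‖g‖ * ‖b‖)
    (fun e => by
      calc ‖Ψ (g.comp (b e))‖ ≤ ‖Ψ‖ * ‖g.comp (b e)‖ := Ψ.le_opNorm _
        _ ≤ ‖Ψ‖ * (‖g‖ * ‖b e‖) := by gcongr; exact g.opNorm_comp_le _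
        _ ≤ ‖Ψ‖ * (‖g‖ * (‖b‖ * ‖e‖)) := by gcongr; exact b.le_opNorm e
        _ = ‖Ψ‖ * ‖g‖ * ‖b‖ * ‖e‖ := by ring)

@[simp] lemma arT_apply (b : E →L[ℂ] F →L[ℂ] G) (Ψ : Dl (Dl F)) (g : Dl G)
    (e : E) : arT b Ψ g e = Ψ (g.comp (b e)) := rfl

lemma arT_add_right (b : E →L[ℂ] F →L[ℂ] G) (Ψ Ψ' : Dl (Dl F)) (g : Dl G) :
    arT b (Ψ + Ψ') g = arT b Ψ g + arT b Ψ' g := by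
  ext e; simp

lemma arT_smul_right (b : E →L[ℂ] F →L[ℂ] G) (c : ℂ) (Ψ : Dl (Dl F)) (g : Dl G) :
    arT b (c • Ψ) g = c • arT b Ψ g := by
  ext e; simp

lemma arT_add_g (b : E →L[ℂ] F →L[ℂ] G) (Ψ : Dl (Dl F)) (g g' : Dl G) :
    arT b Ψ (g + g') = arT b Ψ g + arT b Ψ g' := by
  ext e; simp [ContinuousLinearMap.add_comp]

lemma arT_smul_g (b : E →L[ℂ] F →L[ℂ] G) (c : ℂ) (Ψ : Dl (Dl F)) (g : Dl G) :
    arT b Ψ (c • g) = c • arT b Ψ g := by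
  ext e; simp [ContinuousLinearMap.smul_comp]

/-- One half of the Arens extension: `(arExtFun b Φ Ψ) g = Φ (e ↦ Ψ (g ∘ b e))`. -/
def arExtFun (b : E →L[ℂ] F →L[ℂ] G) (Φ : Dl (Dl E)) (Ψ : Dl (Dl F)) :
    Dl (Dl G) :=
  LinearMap.mkContinuous
    { toFun := fun g => Φ (arT b Ψ g)
      map_add' := fun g g' => by simp only [arT_add_g, map_add]
      map_smul' := fun c g => by simp only [arT_smul_g, map_smul, RingHom.id_apply] }
    (‖Φ‖ * ‖Ψ‖ * ‖b‖)
    (fun g => by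
      calc ‖Φ (arT b Ψ g)‖ ≤ ‖Φ‖ * ‖arT b Ψ g‖ := Φ.le_opNorm _
        _ ≤ ‖Φ‖ * (‖Ψ‖ * ‖g‖ * ‖b‖) := by
            gcongr
            exact LinearMap.mkContinuous_norm_le _ (by positivity) _
        _ = ‖Φ‖ * ‖Ψ‖ * ‖b‖ * ‖g‖ := by ring)

@[simp] lemma arExtFun_apply (b : E →L[ℂ] F →L[ℂ] G) (Φ : Dl (Dl E))
    (Ψ : Dl (Dl F)) (g : Dl G) : arExtFun b Φ Ψ g = Φ (arT b Ψ g) := rfl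

lemma arExtFun_norm_le (b : E →L[ℂ] F →L[ℂ] G) (Φ : Dl (Dl E))
    (Ψ : Dl (Dl F)) : ‖arExtFun b Φ Ψ‖ ≤ ‖Φ‖ * ‖Ψ‖ * ‖b‖ :=
  LinearMap.mkContinuous_norm_le _ (by positivity) _

/-- The (first-)Arens-type extension of a bounded bilinear map `b : E × F → G` to the
biduals, obtained by iterated weak* limits (outer limit in the first variable):
`(arExt b Φ Ψ) g = Φ (e ↦ Ψ (g ∘ b e))`. -/
def arExt (b : E →L[ℂ] F →L[ℂ] G) :
    Dl (Dl E) →L[ℂ] Dl (Dl F) →L[ℂ] Dl (Dl G) :=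
  LinearMap.mkContinuous₂
    (LinearMap.mk₂ ℂ (arExtFun b)
      (fun Φ Φ' Ψ => by ext g; simp)
      (fun c Φ Ψ => by ext g; simp)
      (fun Φ Ψ Ψ' => by ext g; simp [arT_add_right])
      (fun c Φ Ψ => by ext g; simp [arT_smul_right]))
    ‖b‖
    (fun Φ Ψ => by
      simp only [LinearMap.mk₂_apply]
      exact (arExtFun_norm_le b Φ Ψ).trans (le_of_eq (by ring)))

@[simp] lemma arExt_apply (b : E →L[ℂ] F →L[ℂ] G) (Φ : Dl (Dl E))
    (Ψ : Dl (Dl F)) (g : Dl G) : arExt b Φ Ψ g = Φ (arT b Ψ g) := rfl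

end Arens

/- ## Arens products and Arens module extensions -/

/-- The first Arens product on the bidual of a Banach algebra. -/
def arensMul (A : Type u) [NonUnitalNormedRing A] [NormedSpace ℂ A]
    [SMulCommClass ℂ A A] [IsScalarTower ℂ A A] :
    Dl (Dl A) →L[ℂ] Dl (Dl A) →L[ℂ] Dl (Dl A) :=
  arExt (ContinuousLinearMap.mul ℂ A)

/-- The second Arens product on the bidual of a Banach algebra. -/
def arensMul₂ (A : Type u) [NonUnitalNormedRing A] [NormedSpace ℂ A]
    [SMulCommClass ℂ A A] [IsScalarTower ℂ A A]
    (F G : Dl (Dl A)) : Dl (Dl A) :=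
  arExt (ContinuousLinearMap.mul ℂ A).flip G F

namespace Bimodule

variable {X : Type u} [NormedAddCommGroup X] [NormedSpace ℂ X]

/-- First (iterated weak*-limit) extension of the left action:
`a'' · x'' = w*-lim_i lim_j a_i • x_j`. -/
def lExt (M : Bimodule A X) (F : Dl (Dl A)) (ξ : Dl (Dl X)) :
    Dl (Dl X) :=
  arExt M.l F ξ

/-- Second extension of the left action: `a'' · x'' = w*-lim_j lim_i a_i • x_j`. -/
def lExt₂ (M : Bimodule A X) (F : Dl (Dl A)) (ξ : Dl (Dl X)) :
    Dl (Dl X) :=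
  arExt M.l.flip ξ F

/-- First (iterated weak*-limit) extension of the right action:
`x'' · a'' = w*-lim_j lim_i x_j • a_i`. -/
def rExt (M : Bimodule A X) (ξ : Dl (Dl X)) (F : Dl (Dl A)) :
    Dl (Dl X) :=
  arExt M.r.flip ξ F

/-- Second extension of the right action: `x'' · a'' = w*-lim_i lim_j x_j • a_i`. -/
def rExt₂ (M : Bimodule A X) (ξ : Dl (Dl X)) (F : Dl (Dl A)) :
    Dl (Dl X) :=
  arExt M.r F ξ

/-- The topological centre of the right module action of `A` on `X`, i.e. the set of
`x'' ∈ X**` such that `a'' ↦ x'' · a''` is weak*-weak* continuous. -/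
def rTopCenter (M : Bimodule A X) : Set (Dl (Dl X)) :=
  {ξ | Continuous fun F : WeakDual ℂ (Dl A) => (M.rExt ξ F : WeakDual ℂ (Dl X))}

end Bimodule

/-- The topological centre of the bidual of a Banach algebra (with the first
Arens product): the set of `F ∈ A**` for which `G ↦ F □ G` is weak*-weak* continuous. -/
def arensTopCenter (A : Type u) [NonUnitalNormedRing A] [NormedSpace ℂ A]
    [SMulCommClass ℂ A A] [IsScalarTower ℂ A A] : Set (Dl (Dl A)) :=
  {F | Continuous fun G : WeakDual ℂ (Dl A) => (arensMul A F G : WeakDual ℂ (Dl A))}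

/- ## Adjoint maps -/

section DMap

variable {E F : Type*} [SeminormedAddCommGroup E] [NormedSpace ℂ E]
  [SeminormedAddCommGroup F] [NormedSpace ℂ F]

/-- The adjoint (dual map) of a bounded operator. -/
def dMap (f : E →L[ℂ] F) : Dl F →L[ℂ] Dl E :=
  (ContinuousLinearMap.compL ℂ E F ℂ).flip f

@[simp] lemma dMap_apply (f : E →L[ℂ] F) (g : Dl F) : dMap f g = g.comp f := rfl

/-- The canonical projection `X⁽⁴⁾ → X⁽²⁾`, i.e. the adjoint of the canonical
embedding `X* → X***`. -/
def Pmap (X : Type u) [SeminormedAddCommGroup X] [NormedSpace ℂ X] :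
    Dl (Dl (Dl (Dl X))) →L[ℂ] Dl (Dl X) :=
  dMap (inclDD (Dl X))

end DMap


/-- **Theorem 1.5.** If `A` is `(n+2)-I`-weakly amenable then `A` is
`n-I`-weakly amenable. -/
theorem nIWeaklyAmenable_of_add_two
    {A : Type u} [NonUnitalNormedRing A] [NormedSpace ℂ A]
    [SMulCommClass ℂ A A] [IsScalarTower ℂ A A] [CompleteSpace A]
    (I : ClosedIdeal A) (n : ℕ) (hn : 1 ≤ n)
    (h : H1Zero (I.toBMod.iter (n + 2))) :
    H1Zero (I.toBMod.iter n) := by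
  obtain ⟨m, rfl⟩ : ∃ m, n = m + 1 := ⟨n - 1, by omega⟩
  generalize hY : I.toBMod.iter m = Y at *
  have h' : H1Zero Y.dualObj.dualObj.dualObj := by
    rw [← hY]; exact h
  have goal' : H1Zero Y.dualObj := by
    intro D hD
    obtain ⟨ξ, hξ⟩ := h' ((inclDD (Dl Y.X)).comp D : A →L[ℂ] Dl (Dl (Dl Y.X))) (by
      intro a b
      refine ContinuousLinearMap.ext fun (f : Dl (Dl Y.X)) => ?_
      change f (D (a * b)) = f (Y.act.dualMod.l a (D b)) + f (Y.act.dualMod.r b (D a))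
      exact (congrArg f (hD a b)).trans (map_add f _ _))
    let ζ : Dl (Dl (Dl Y.X)) := ξ
    refine ⟨(dMap (inclDD Y.X) ζ : Dl Y.X), fun a => ?_⟩
    refine ContinuousLinearMap.ext fun (y : Y.X) => ?_
    have := congrArg (fun F : Dl (Dl (Dl Y.X)) => F (inclDD Y.X y)) (hξ a)
    have e1 : Y.act.dualMod.dualMod.r a (inclDD Y.X y) = inclDD Y.X (Y.act.r a y) := by
      ext f; simp
    have e2 : Y.act.dualMod.dualMod.l a (inclDD Y.X y) = inclDD Y.X (Y.act.l a y) := by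
      ext f; simp
    refine Eq.trans this ?_
    change ζ (Y.act.dualMod.dualMod.r a (inclDD Y.X y))
      - ζ (Y.act.dualMod.dualMod.l a (inclDD Y.X y)) = _
    rw [e1, e2]
    rfl
  rw [← hY] at goal'
  exact goal'
end
end

section
/- Let A be a Banach algebra and n ∈ ℕ. If A is (n+2)-ideally amenable, then A is n-ideally amenable. -/
/- ## Core definitions: Banach bimodules over (non-unital) complex Banach algebras,
iterated dual modules, derivations, ideal amenability, and Arens extensions. -/

noncomputable section

open ContinuousLinearMap

universe u

variable {A : Type u} [NonUnitalNormedRing A] [NormedSpace ℂ A]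
  [SMulCommClass ℂ A A] [IsScalarTower ℂ A A]

theorem H1Zero_dual_of_dual3 (M : BMod A) (h : H1Zero M.dualObj.dualObj.dualObj) :
    H1Zero M.dualObj := by
  intro D hD
  obtain ⟨x, hx⟩ := h ((inclDD (Dl M.X)).comp D) (by
    intro a b
    have h1 : D (a * b) = M.act.dualMod.l a (D b) + M.act.dualMod.r b (D a) := hD a b
    refine ContinuousLinearMap.ext fun (φ : Dl (Dl M.X)) => ?_
    change φ (D (a * b)) = φ (M.act.dualMod.l a (D b)) + φ (M.act.dualMod.r b (D a))
    rw [h1, map_add])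
  refine ⟨dMap (inclDD M.X) x, fun a => ?_⟩
  refine ContinuousLinearMap.ext fun (m : M.X) => ?_
  have h2 := congrArg (fun f : Dl (Dl (Dl M.X)) => f (inclDD M.X m)) (hx a)
  exact h2

/-- **Corollary 1.6.** If `A` is `(n+2)`-ideally amenable then `A` is
`n`-ideally amenable. -/
theorem nIdeallyAmenable_of_add_two
    {A : Type u} [NonUnitalNormedRing A] [NormedSpace ℂ A]
    [SMulCommClass ℂ A A] [IsScalarTower ℂ A A] [CompleteSpace A]
    (n : ℕ) (hn : 1 ≤ n)
    (h : NIdeallyAmenable A (n + 2)) :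
    NIdeallyAmenable A n := by
  obtain ⟨m, rfl⟩ : ∃ m, n = m + 1 := ⟨n - 1, by omega⟩
  intro I
  exact H1Zero_dual_of_dual3 (I.toBMod.iter m) (h I)
end
end

section
/- Let A be a commutative Banach algebra. Then the following are equivalent: (i) A is weakly amenable; (ii) A is (2k+1)-weakly amenable for some k ≥ 0; (iii) A is ideally amenable; (iv) A is (2k+1)-ideally amenable for some k ≥ 0; (v) A is permanently ideally amenable. -/
/- ## Core definitions: Banach bimodules over (non-unital) complex Banach algebras,
iterated dual modules, derivations, ideal amenability, and Arens extensions. -/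

noncomputable section

open ContinuousLinearMap

universe u

variable {A : Type u} [NonUnitalNormedRing A] [NormedSpace ℂ A]
  [SMulCommClass ℂ A A] [IsScalarTower ℂ A A]

lemma eq_zero_of_dual {X : Type u} [NormedAddCommGroup X] [NormedSpace ℂ X] (x : X)
    (h : ∀ f : Dl X, f x = 0) : x = 0 := by
  by_contra hne
  obtain ⟨f, -, hf⟩ := exists_dual_vector ℂ x (norm_ne_zero_iff.mpr hne)
  rw [h f] at hf
  exact hne (norm_eq_zero.mp (Complex.ofReal_eq_zero.mp hf.symm))

def SymB (M : BMod A) : Prop := ∀ a x, M.act.l a x = M.act.r a x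

def DerZ (M : BMod A) : Prop := ∀ D : A →L[ℂ] M.X, IsDerivation M D → ∀ a, D a = 0

lemma SymB.dual {M : BMod A} (h : SymB M) : SymB M.dualObj := by
  intro a f
  refine ContinuousLinearMap.ext (fun (x : M.X) => ?_)
  exact congrArg (show Dl M.X from f) (h a x).symm

lemma SymB.iter {M : BMod A} (h : SymB M) : ∀ n, SymB (M.iter n)
  | 0 => h
  | n + 1 => (SymB.iter h n).dual

lemma SymB.h1_iff {M : BMod A} (h : SymB M) : H1Zero M ↔ DerZ M := by
  constructor
  · intro H D hD a
    obtain ⟨x, hx⟩ := H D hD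
    rw [hx, h, sub_self]
  · intro H D hD
    exact ⟨0, fun a => by rw [H D hD a, map_zero, map_zero, sub_zero]⟩

lemma derZ_of_injective {M N : BMod A} (T : M.X →L[ℂ] N.X)
    (hl : ∀ a x, T (M.act.l a x) = N.act.l a (T x))
    (hr : ∀ a x, T (M.act.r a x) = N.act.r a (T x))
    (hT : ∀ x, T x = 0 → x = 0) (H : DerZ N) : DerZ M := by
  intro D hD a
  apply hT
  refine H (T.comp D) ?_ a
  intro a b
  simp only [ContinuousLinearMap.comp_apply]
  rw [hD, map_add, hl, hr]

lemma derZ_of_dd {M : BMod A} (H : DerZ M.dualObj.dualObj) : DerZ M := by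
  refine derZ_of_injective (M := M) (N := M.dualObj.dualObj) (inclDD M.X) ?_ ?_ ?_ H
  · intro a x
    refine ContinuousLinearMap.ext (fun (f : Dl M.X) => ?_)
    rfl
  · intro a x
    refine ContinuousLinearMap.ext (fun (f : Dl M.X) => ?_)
    rfl
  · intro x hx
    exact eq_zero_of_dual x (fun f => congrArg (fun g : Dl (Dl M.X) => g f) hx)

lemma derZ_odd {M : BMod A} : ∀ k : ℕ, DerZ (M.iter (2 * k + 1)) → DerZ (M.iter 1)
  | 0 => id
  | k + 1 => fun H => derZ_odd k (derZ_of_dd (M := M.iter (2 * k + 1)) H)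

/-- the whole algebra as a closed ideal -/
def topIdeal (A : Type u) [NonUnitalNormedRing A] [NormedSpace ℂ A]
    [SMulCommClass ℂ A A] [IsScalarTower ℂ A A] : ClosedIdeal A where
  car := ⊤
  isClosed := by simp
  mul_mem_left := fun _ _ _ => trivial
  mul_mem_right := fun _ _ _ => trivial

lemma derZ_top (H : DerZ ((topIdeal A).toBMod.iter 1)) : DerZ ((regBMod A).iter 1) := by
  refine derZ_of_injective (M := (regBMod A).iter 1) (N := (topIdeal A).toBMod.iter 1)
    (dMap (topIdeal A).car.subtypeL) ?_ ?_ ?_ H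
  · intro a f
    rfl
  · intro a f
    rfl
  · intro f hf
    refine ContinuousLinearMap.ext (fun (x : A) => ?_)
    exact congrArg (fun g : Dl (topIdeal A).car => g ⟨x, trivial⟩) hf

lemma derZ_reg_apply (H : DerZ ((regBMod A).iter 1)) (D : A →L[ℂ] Dl A)
    (hD : ∀ a b x, D (a * b) x = D b (x * a) + D a (b * x)) (a x : A) : D a x = 0 := by
  have := H D (fun a b => ContinuousLinearMap.ext (fun (x : A) => hD a b x)) a
  exact congrArg (fun g : Dl A => g x) this

lemma functional_zero (H : DerZ ((regBMod A).iter 1)) (f : Dl A)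
    (hf : ∀ a b, f (a * b) = 0) (a : A) : f a = 0 := by
  have := derZ_reg_apply H (f.smulRight f) (fun a b x => by simp [hf]) a a
  simpa using this

lemma derZ_all (hcomm : ∀ a b : A, a * b = b * a)
    (H : DerZ ((regBMod A).iter 1)) (M : BMod A) (hM : SymB M) : DerZ M := by
  intro D hD a
  have h1 : ∀ a b, M.act.l a (D b) = 0 := by
    intro a b
    refine eq_zero_of_dual _ (fun f => ?_)
    refine derZ_reg_apply H
      (((ContinuousLinearMap.compL ℂ A M.X ℂ f).comp M.act.l.flip).comp D) ?_ b a
    intro a b x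
    simp only [ContinuousLinearMap.comp_apply, ContinuousLinearMap.compL_apply,
      ContinuousLinearMap.flip_apply]
    rw [hD, ← hM, map_add, map_add, M.act.l_mul, hcomm b x, M.act.l_mul]
  refine eq_zero_of_dual _ (fun f => ?_)
  refine functional_zero H (f.comp D) (fun a b => ?_) a
  simp only [ContinuousLinearMap.comp_apply]
  rw [hD, ← hM, h1, h1, add_zero, map_zero]

/-- **Theorem 3.1.** For a commutative Banach algebra the following are equivalent:
(i) weak amenability; (ii) `(2k+1)`-weak amenability for some `k ≥ 0`;
(iii) ideal amenability; (iv) `(2k+1)`-ideal amenability for some `k ≥ 0`;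
(v) permanent ideal amenability. -/
theorem comm_weak_amenability_tfae
    {A : Type u} [NonUnitalNormedRing A] [NormedSpace ℂ A]
    [SMulCommClass ℂ A A] [IsScalarTower ℂ A A] [CompleteSpace A]
    (hcomm : ∀ a b : A, a * b = b * a) :
    (NWeaklyAmenable A 1 ↔ ∃ k : ℕ, NWeaklyAmenable A (2 * k + 1)) ∧
    (NWeaklyAmenable A 1 ↔ NIdeallyAmenable A 1) ∧
    (NWeaklyAmenable A 1 ↔ ∃ k : ℕ, NIdeallyAmenable A (2 * k + 1)) ∧
    (NWeaklyAmenable A 1 ↔ ∀ n : ℕ, 1 ≤ n → NIdeallyAmenable A n) := by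
  have sR : SymB (regBMod A) := fun a x => hcomm a x
  have sI : ∀ I : ClosedIdeal A, SymB I.toBMod := fun I a x => Subtype.ext (hcomm a (show I.car from x).1)
  have h1 : NWeaklyAmenable A 1 ↔ DerZ ((regBMod A).iter 1) := (sR.iter 1).h1_iff
  have h2 : NWeaklyAmenable A 1 → ∀ n, NIdeallyAmenable A n := fun h n I =>
    ((sI I).iter n).h1_iff.mpr (derZ_all hcomm (h1.mp h) _ ((sI I).iter n))
  have h3 : ∀ k, NIdeallyAmenable A (2 * k + 1) → NWeaklyAmenable A 1 := fun k h =>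
    h1.mpr (derZ_top (derZ_odd k (((sI _).iter _).h1_iff.mp (h (topIdeal A)))))
  refine ⟨⟨fun h => ⟨0, h⟩, ?_⟩, ⟨fun h => h2 h 1, h3 0⟩, ⟨fun h => ⟨0, h2 h 1⟩, ?_⟩,
    ⟨fun h n _ => h2 h n, fun h => h3 0 (h 1 le_rfl)⟩⟩
  · rintro ⟨k, h⟩
    exact h1.mpr (derZ_odd k ((sR.iter _).h1_iff.mp h))
  · rintro ⟨k, h⟩
    exact h3 k h
end
end

section
/- Let A be a commutative Arens regular Banach algebra such that A** (with the Arens product) is semisimple. Then A is 2-ideally amenable. -/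
/- ## Core definitions: Banach bimodules over (non-unital) complex Banach algebras,
iterated dual modules, derivations, ideal amenability, and Arens extensions. -/

noncomputable section

open ContinuousLinearMap

universe u

variable {A : Type u} [NonUnitalNormedRing A] [NormedSpace ℂ A]
  [SMulCommClass ℂ A A] [IsScalarTower ℂ A A]

/- ## Kleinecke–Shirokov and the proof -/

section KS

variable {R : Type*} [NormedRing R]

private def adj (T : R) : R → R := fun X => T * X - X * T

lemma ks_leib (T S : R) (hc : Commute T (T * S - S * T)) (m : ℕ) (X : R) :
    (adj T)^[m + 1] (S * X) =
      S * (adj T)^[m + 1] X + ((m + 1 : ℕ) : R) * ((T * S - S * T) * (adj T)^[m] X) := by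
  induction m with
  | zero => simp [adj]; noncomm_ring
  | succ m ih =>
    rw [Function.iterate_succ_apply', ih]
    have h1 : (adj T)^[m + 1 + 1] X = adj T ((adj T)^[m + 1] X) :=
      Function.iterate_succ_apply' _ _ _
    have h2 : (adj T)^[m + 1] X = adj T ((adj T)^[m] X) :=
      Function.iterate_succ_apply' _ _ _
    rw [h1]
    set Z := (adj T)^[m + 1] X
    set Y := (adj T)^[m] X
    have hadd : ∀ U V : R, adj T (U + V) = adj T U + adj T V := by
      intro U V; simp only [adj]; noncomm_ring
    have hcast : ∀ (k : ℕ) (U : R), adj T ((k : R) * U) = (k : R) * adj T U := by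
      intro k U
      simp only [adj]
      rw [mul_sub, ← mul_assoc, ← mul_assoc, ← mul_assoc, (Nat.cast_commute k T).eq]
    have hS : adj T (S * Z) = (T * S - S * T) * Z + S * adj T Z := by
      simp only [adj]; noncomm_ring
    have hC : adj T ((T * S - S * T) * Y) = (T * S - S * T) * Z := by
      rw [h2]
      simp only [adj]
      rw [← mul_assoc, hc.eq, mul_sub, mul_assoc, mul_assoc]
    rw [hadd, hcast, hS, hC]
    push_cast
    noncomm_ring

lemma ks_pow (T S : R) (hc : Commute T (T * S - S * T)) (n : ℕ) :
    (adj T)^[n] (S ^ n) = (n.factorial : R) * (T * S - S * T) ^ n ∧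
      (adj T)^[n + 1] (S ^ n) = 0 := by
  induction n with
  | zero => simp [adj]
  | succ n ih =>
    obtain ⟨h1, h2⟩ := ih
    rw [pow_succ' S, ks_leib T S hc, ks_leib T S hc, h1, h2]
    constructor
    · rw [Nat.factorial_succ, pow_succ']
      push_cast
      have := (Nat.cast_commute n.factorial (T * S - S * T)).eq
      rw [mul_zero, zero_add, ← mul_assoc (T * S - S * T), ← this]
      simp only [mul_assoc]
    · rw [Function.iterate_succ_apply', h2]
      simp [adj]

lemma ks_norm (T X : R) (n : ℕ) : ‖(adj T)^[n] X‖ ≤ (2 * ‖T‖) ^ n * ‖X‖ := by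
  induction n with
  | zero => simp
  | succ n ih =>
    rw [Function.iterate_succ_apply']
    set Y := (adj T)^[n] X
    calc ‖adj T Y‖ ≤ ‖T * Y‖ + ‖Y * T‖ := norm_sub_le _ _
      _ ≤ ‖T‖ * ‖Y‖ + ‖Y‖ * ‖T‖ := add_le_add (norm_mul_le _ _) (norm_mul_le _ _)
      _ = 2 * ‖T‖ * ‖Y‖ := by ring
      _ ≤ 2 * ‖T‖ * ((2 * ‖T‖) ^ n * ‖X‖) := by gcongr
      _ = _ := by ring

lemma ks_unit [NormedAlgebra ℂ R] [CompleteSpace R] (T S Q : R)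
    (hc : Commute T (T * S - S * T))
    (hQ : Commute Q (T * S - S * T)) : IsUnit (1 - Q * (T * S - S * T)) := by
  set c := T * S - S * T with hcdef
  have hb : ∀ n : ℕ, 0 < n → ‖(Q * c) ^ n‖ ≤ (‖Q‖ * (2 * ‖T‖ * ‖S‖)) ^ n / n.factorial := by
    intro n hn
    rw [hQ.mul_pow, le_div_iff₀ (by positivity)]
    have h1 : ‖(n.factorial : R) * c ^ n‖ = n.factorial * ‖c ^ n‖ := by
      rw [← nsmul_eq_mul, ← Nat.cast_smul_eq_nsmul ℂ, norm_smul]; simp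
    have h2 : (n.factorial : ℝ) * ‖c ^ n‖ ≤ (2 * ‖T‖) ^ n * ‖S‖ ^ n := by
      rw [← h1, hcdef, ← (ks_pow T S hc n).1]
      refine (ks_norm _ _ _).trans ?_
      gcongr
      exact norm_pow_le' S hn
    calc ‖Q ^ n * c ^ n‖ * n.factorial ≤ (‖Q‖ ^ n * ‖c ^ n‖) * n.factorial := by
          gcongr
          exact (norm_mul_le _ _).trans (by gcongr; exact norm_pow_le' Q hn)
      _ = ‖Q‖ ^ n * (n.factorial * ‖c ^ n‖) := by ring
      _ ≤ ‖Q‖ ^ n * ((2 * ‖T‖) ^ n * ‖S‖ ^ n) := by gcongr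
      _ = _ := by rw [mul_pow, mul_pow]; ring
  have ht := FloorSemiring.tendsto_pow_div_factorial_atTop (‖Q‖ * (2 * ‖T‖ * ‖S‖))
  obtain ⟨n, hn1, hn2⟩ := ((ht.eventually_lt_const one_pos).and
    (Filter.eventually_gt_atTop 0)).exists
  have hu : IsUnit (1 - (Q * c) ^ n) :=
    isUnit_one_sub_of_norm_lt_one ((hb n hn2).trans_lt hn1)
  have hg : (1 - Q * c) * (∑ i ∈ Finset.range n, (Q * c) ^ i) = 1 - (Q * c) ^ n :=
    mul_neg_geom_sum _ _
  have hcm : Commute (1 - Q * c) (∑ i ∈ Finset.range n, (Q * c) ^ i) :=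
    (mul_neg_geom_sum _ _).trans (geom_sum_mul_neg _ _).symm
  rw [← hg] at hu
  exact (hcm.isUnit_mul_iff.1 hu).1

lemma ks_op {X : Type*} [NormedAddCommGroup X] [NormedSpace ℂ X] [CompleteSpace X]
    (T S Q C : X →L[ℂ] X) (hC : ∀ x, T (S x) - S (T x) = C x)
    (hT : ∀ x, T (C x) = C (T x)) (hQ : ∀ x, Q (C x) = C (Q x)) (x : X) :
    ∃ K : X, K - Q (C K) = x := by
  have h : T * S - S * T = C := by ext y; exact hC y
  have hu := ks_unit T S Q (by rw [h]; ext y; exact hT y) (by rw [h]; ext y; exact hQ y)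
  rw [h] at hu
  obtain ⟨u, hu⟩ := hu
  refine ⟨(↑u⁻¹ : X →L[ℂ] X) x, ?_⟩
  have h3 : ((u : X →L[ℂ] X) * (↑u⁻¹ : X →L[ℂ] X)) x = x := by
    rw [Units.mul_inv]; rfl
  rw [hu] at h3
  exact h3

lemma ks_abel {X : Type*} [AddCommGroup X] (K m x : X) (h : K - m = x) :
    -K + x - (-m) = 0 := by
  rw [← h]; abel

lemma ks_alg {X : Type*} [NormedAddCommGroup X] [NormedSpace ℂ X] [CompleteSpace X]
    (m : X →L[ℂ] X →L[ℂ] X) (hc : ∀ x y, m x y = m y x)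
    (hassoc : ∀ x y z, m (m x y) z = m x (m y z))
    (S : X →L[ℂ] X) (t e : X) (h : ∀ x, S (m t x) = m t (S x) + m e x) (g : X) :
    ∃ y : X, y + m g e - m y (m g e) = 0 := by
  have hcommute : ∀ x y z, m x (m y z) = m y (m x z) := by
    intro x y z
    rw [← hassoc, ← hassoc, hc x y]
  obtain ⟨K, hK⟩ := ks_op (m t) (-S) (m g) (m e)
    (fun x => by simp [h x]) (hcommute _ _) (hcommute _ _) (m g e)
  refine ⟨-K, ?_⟩
  rw [← hassoc] at hK
  rw [hc (-K), map_neg]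
  exact ks_abel _ _ _ hK

end KS

lemma arens_comm
    {A : Type u} [NonUnitalNormedRing A] [NormedSpace ℂ A]
    [SMulCommClass ℂ A A] [IsScalarTower ℂ A A]
    (hcomm : ∀ a b : A, a * b = b * a)
    (hreg : ∀ F G : Dl (Dl A), arensMul A F G = arensMul₂ A F G) (F G : Dl (Dl A)) :
    arensMul A F G = arensMul A G F := by
  have hflip : (ContinuousLinearMap.mul ℂ A).flip = ContinuousLinearMap.mul ℂ A := by
    ext a b; simp [hcomm b a]
  rw [hreg F G, arensMul₂, hflip]; rfl

lemma arens_assoc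
    {A : Type u} [NonUnitalNormedRing A] [NormedSpace ℂ A]
    [SMulCommClass ℂ A A] [IsScalarTower ℂ A A]
    (F G H : Dl (Dl A)) :
    arensMul A (arensMul A F G) H = arensMul A F (arensMul A G H) := by
  ext f
  simp only [arensMul, arExt_apply]
  refine congrArg F (ContinuousLinearMap.ext fun a => ?_)
  simp only [arT_apply, arExt_apply]
  refine congrArg G (ContinuousLinearMap.ext fun b => ?_)
  simp only [arT_apply]
  refine congrArg H (ContinuousLinearMap.ext fun c => ?_)
  simp [mul_assoc]

lemma arens_ext_der
    {A : Type u} [NonUnitalNormedRing A] [NormedSpace ℂ A]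
    [SMulCommClass ℂ A A] [IsScalarTower ℂ A A]
    (hc : ∀ F G : Dl (Dl A), arensMul A F G = arensMul A G F)
    (E : A →L[ℂ] Dl (Dl A))
    (hEder : ∀ (a b : A) (f : Dl A), E (a * b) f =
      E b (f.comp (ContinuousLinearMap.mul ℂ A a)) +
      E a (f.comp (ContinuousLinearMap.mul ℂ A b))) (a : A) (G : Dl (Dl A)) :
    dMap E.flip (arensMul A (inclDD A a) G)
      = arensMul A (inclDD A a) (dMap E.flip G) + arensMul A (E a) G := by
  refine ContinuousLinearMap.ext fun f => ?_
  rw [hc (E a) G]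
  change G ((E.flip f).comp (ContinuousLinearMap.mul ℂ A a)) = G _ + G _
  rw [← map_add]
  refine congrArg G (ContinuousLinearMap.ext fun b => ?_)
  exact hEder a b f

lemma arens_qr {A : Type u} [NonUnitalNormedRing A] [NormedSpace ℂ A]
    [SMulCommClass ℂ A A] [IsScalarTower ℂ A A] (m : Dl (Dl A) →L[ℂ] Dl (Dl A) →L[ℂ] Dl (Dl A))
    (hc : ∀ x y, m x y = m y x)
    (hassoc : ∀ x y z, m (m x y) z = m x (m y z))
    (S : Dl (Dl A) →L[ℂ] Dl (Dl A)) (t e : Dl (Dl A))  (h : ∀ x, S (m t x) = m t (S x) + m e x) (g : Dl (Dl A)) :  ∃ y : Dl (Dl A), y + m g e - m y (m g e) = 0 := by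
  have h' := @ks_alg (Dl (Dl A)) _ _ _
  have h' := h' m hc hassoc S t e h g
  exact h'

lemma arens_der_zero
    {A : Type u} [NonUnitalNormedRing A] [NormedSpace ℂ A]
    [SMulCommClass ℂ A A] [IsScalarTower ℂ A A]
    (hcomm : ∀ a b : A, a * b = b * a)
    (hreg : ∀ F G : Dl (Dl A), arensMul A F G = arensMul₂ A F G)
    (hss : ∀ F : Dl (Dl A),
      (∀ G : Dl (Dl A), ∃ H : Dl (Dl A),
        H + arensMul A G F - arensMul A H (arensMul A G F) = 0) → F = 0)
    (E : A →L[ℂ] Dl (Dl A))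
    (hEder : ∀ (a b : A) (f : Dl A), E (a * b) f =
      E b (f.comp (ContinuousLinearMap.mul ℂ A a)) +
      E a (f.comp (ContinuousLinearMap.mul ℂ A b))) (a : A) : E a = 0 := by
  have hc := arens_comm hcomm hreg
  have h1 := arens_ext_der hc E hEder a
  have h2 := arens_qr (arensMul A) hc arens_assoc (dMap E.flip) (inclDD A a) (E a) h1
  exact hss (E a) h2

/-- **Corollary 3.3.** Let `A` be a commutative Arens regular Banach algebra such
that `A**` is semisimple (here: the Jacobson radical of `A**` with the Arens product
is zero, expressed via quasi-regularity).  Then `A` is `2`-ideally amenable. -/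
theorem two_ideally_amenable_of_semisimple_bidual
    {A : Type u} [NonUnitalNormedRing A] [NormedSpace ℂ A]
    [SMulCommClass ℂ A A] [IsScalarTower ℂ A A] [CompleteSpace A]
    (hcomm : ∀ a b : A, a * b = b * a)
    (hreg : ∀ F G : Dl (Dl A), arensMul A F G = arensMul₂ A F G)
    (hss : ∀ F : Dl (Dl A),
      (∀ G : Dl (Dl A), ∃ H : Dl (Dl A),
        H + arensMul A G F - arensMul A H (arensMul A G F) = 0) → F = 0) :
    NIdeallyAmenable A 2 := by
  intro I D hD
  change A →L[ℂ] Dl (Dl I.car) at D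
  have hD' : ∀ a b : A, D (a * b) =
      I.toBMod.act.dualMod.dualMod.l a (D b) + I.toBMod.act.dualMod.dualMod.r b (D a) := hD
  let E : A →L[ℂ] Dl (Dl A) := (dMap (dMap I.car.subtypeL)).comp D
  have hE : ∀ a f, E a f = D a (f.comp I.car.subtypeL) := fun a f => rfl
  have hEder : ∀ (a b : A) (f : Dl A), E (a * b) f =
      E b (f.comp (ContinuousLinearMap.mul ℂ A a)) +
      E a (f.comp (ContinuousLinearMap.mul ℂ A b)) := by
    intro a b f
    rw [hE, hE, hE, hD' a b]
    change D b _ + D a _ = _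
    congr 2
    ext x
    change f ((show I.car from x : A) * b) = f (b * (show I.car from x : A))
    rw [hcomm]
  have hE0 : ∀ a, E a = 0 := arens_der_zero hcomm hreg hss E hEder
  have hD0 : ∀ a, D a = 0 := by
    intro a
    ext g
    obtain ⟨f, hf, -⟩ := exists_extension_norm_eq I.car g
    have h := congrArg (fun Φ : Dl (Dl A) => Φ f) (hE0 a)
    have hg : f.comp I.car.subtypeL = g := by ext x; exact hf x
    simp only [hE, hg] at h
    simpa using h
  refine ⟨0, fun a => ?_⟩
  rw [map_zero, map_zero, sub_zero]
  exact hD0 a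
end
end
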